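/- Let η : ℝ → (0,∞) be C² and 1-periodic, and let ψ(x,z) = ∂ₓη(x)·χ(z/η(x)) with χ(s) = s²(3 − 2s). Then for every x and every z ∈ [0, η(x)]: |∂_zψ(x,z)| ≤ (3/2)·|∂ₓη(x)|/η(x), and |∂ₓψ(x,z)| ≤ |∂ₓ²η(x)| + (3/2)·(∂ₓη(x))²/η(x). In particular, if additionally |∂ₓη(x)| ≤ ε ≤ 1 for all x, then |∇ψ(x,z)| ≤ 3·( |∂ₓ²η(x)| + ε/η(x) ). -/

import Mathlib

open MeasureTheory Set

noncomputable section

/-- The cut-off function `χ(s) = s²(3 − 2s)`. -/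
def cutoff (s : ℝ) : ℝ := s ^ 2 * (3 - 2 * s)

/-- The stream function `ψ(x,z) = ∂ₓη(x)·χ(z/η(x))`. -/
def stream (η : ℝ → ℝ) (p : ℝ × ℝ) : ℝ := deriv η p.1 * cutoff (p.2 / η p.1)

/-! With `s = z / η(x) ∈ [0, 1]` the chain rule gives `∂_zψ = ∂ₓη · χ'(s) / η` and
`∂ₓψ = ∂ₓ²η · χ(s) - (∂ₓη)² / η · s χ'(s)`, so everything follows from `|χ| ≤ 1` and
`|χ'| ≤ 3/2` on `[0, 1]`. -/

lemma hasDerivAt_cutoff (s : ℝ) : HasDerivAt cutoff (6 * s * (1 - s)) s := by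
  have h := ((hasDerivAt_id s).pow 2).mul (((hasDerivAt_id s).const_mul 2).const_sub 3)
  refine h.congr_deriv ?_
  simp only [id_eq, Pi.pow_apply]
  ring

lemma differentiable_cutoff : Differentiable ℝ cutoff :=
  fun s => (hasDerivAt_cutoff s).differentiableAt

lemma abs_cutoff_le_one {s : ℝ} (hs : s ∈ Icc 0 1) : |cutoff s| ≤ 1 := by
  obtain ⟨h0, h1⟩ := hs
  have one_sub_cutoff : 1 - cutoff s = (1 - s) ^ 2 * (1 + 2 * s) := by
    unfold cutoff
    ring
  have cutoff_nonneg : 0 ≤ cutoff s := mul_nonneg (sq_nonneg s) (by linarith)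
  have one_sub_nonneg : 0 ≤ 1 - cutoff s := by
    rw [one_sub_cutoff]
    positivity
  rw [abs_of_nonneg cutoff_nonneg]
  linarith

lemma abs_deriv_cutoff_le {s : ℝ} (hs : s ∈ Icc 0 1) : |deriv cutoff s| ≤ 3 / 2 := by
  rw [(hasDerivAt_cutoff s).deriv,
    abs_of_nonneg (mul_nonneg (mul_nonneg (by norm_num) hs.1) (sub_nonneg.2 hs.2))]
  linarith [sq_nonneg (2 * s - 1)]

lemma sqrt_sq_add_sq_le_abs_add_abs (a b : ℝ) : √(a ^ 2 + b ^ 2) ≤ |a| + |b| :=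
  Real.sqrt_le_iff.2 ⟨by positivity,
    by simpa only [sq_abs] using pow_add_pow_le (abs_nonneg a) (abs_nonneg b) two_ne_zero⟩

lemma hasDerivAt_stream_snd (η : ℝ → ℝ) (x z : ℝ) :
    HasDerivAt (fun z' => stream η (x, z')) (deriv η x * (deriv cutoff (z / η x) / η x)) z := by
  have h := ((differentiable_cutoff (z / η x)).hasDerivAt.comp z
    ((hasDerivAt_id z).div_const (η x))).const_mul (deriv η x)
  exact h.congr_deriv (by rw [mul_one_div])

section Stream

variable {η : ℝ → ℝ} {x z : ℝ}

lemma hasDerivAt_stream_fst (hη : DifferentiableAt ℝ η x)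
    (hη' : DifferentiableAt ℝ (deriv η) x) (hx : η x ≠ 0) (z : ℝ) :
    HasDerivAt (fun x' => stream η (x', z))
      (deriv (deriv η) x * cutoff (z / η x)
        - deriv η x ^ 2 / η x * (z / η x * deriv cutoff (z / η x))) x := by
  have quotient : HasDerivAt (fun x' => z / η x') ((0 * η x - z * deriv η x) / η x ^ 2) x :=
    (hasDerivAt_const x z).div hη.hasDerivAt hx
  have h := hη'.hasDerivAt.mul ((differentiable_cutoff (z / η x)).hasDerivAt.comp x quotient)
  refine h.congr_deriv ?_
  simp only [Function.comp_apply]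
  field_simp
  ring

lemma abs_deriv_stream_snd_le (hz : z ∈ Icc 0 (η x)) :
    |deriv (fun z' => stream η (x, z')) z| ≤ 3 / 2 * |deriv η x| / η x := by
  have hη : 0 ≤ η x := hz.1.trans hz.2
  have hs : z / η x ∈ Icc 0 1 := unitInterval.div_mem hz.1 hη hz.2
  calc |deriv (fun z' => stream η (x, z')) z|
      = |deriv η x| * (|deriv cutoff (z / η x)| / η x) := by
        rw [(hasDerivAt_stream_snd η x z).deriv, abs_mul, abs_div, abs_of_nonneg hη]
    _ ≤ |deriv η x| * (3 / 2 / η x) := by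
        gcongr
        exact abs_deriv_cutoff_le hs
    _ = 3 / 2 * |deriv η x| / η x := by ring

lemma abs_deriv_stream_fst_le (hη : DifferentiableAt ℝ η x)
    (hη' : DifferentiableAt ℝ (deriv η) x) (hx : 0 < η x) (hz : z ∈ Icc 0 (η x)) :
    |deriv (fun x' => stream η (x', z)) x|
      ≤ |deriv (deriv η) x| + 3 / 2 * deriv η x ^ 2 / η x := by
  have hs : z / η x ∈ Icc 0 1 := unitInterval.div_mem hz.1 hx.le hz.2
  have hs_abs : |z / η x| ≤ 1 := (abs_of_nonneg hs.1).trans_le hs.2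
  have hsq : 0 ≤ deriv η x ^ 2 / η x := by positivity
  calc |deriv (fun x' => stream η (x', z)) x|
      ≤ |deriv (deriv η) x * cutoff (z / η x)|
          + |deriv η x ^ 2 / η x * (z / η x * deriv cutoff (z / η x))| := by
        rw [(hasDerivAt_stream_fst hη hη' hx.ne' z).deriv]
        exact abs_sub _ _
    _ = |deriv (deriv η) x| * |cutoff (z / η x)|
          + deriv η x ^ 2 / η x * (|z / η x| * |deriv cutoff (z / η x)|) := by
        rw [abs_mul, abs_mul, abs_mul, abs_of_nonneg hsq]
    _ ≤ |deriv (deriv η) x| * 1 + deriv η x ^ 2 / η x * (1 * (3 / 2)) := by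
        gcongr
        · exact abs_cutoff_le_one hs
        · exact abs_deriv_cutoff_le hs
    _ = |deriv (deriv η) x| + 3 / 2 * deriv η x ^ 2 / η x := by ring

lemma norm_grad_stream_le (hη : DifferentiableAt ℝ η x)
    (hη' : DifferentiableAt ℝ (deriv η) x) (hx : 0 < η x) (hz : z ∈ Icc 0 (η x))
    {ε : ℝ} (hε : |deriv η x| ≤ ε) (hε1 : ε ≤ 1) :
    √(deriv (fun x' => stream η (x', z)) x ^ 2 + deriv (fun z' => stream η (x, z')) z ^ 2)
      ≤ 3 * (|deriv (deriv η) x| + ε / η x) := by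
  have sq_le : deriv η x ^ 2 ≤ ε :=
    calc deriv η x ^ 2 = |deriv η x| ^ 2 := (sq_abs _).symm
      _ ≤ |deriv η x| := pow_le_of_le_one (abs_nonneg _) (hε.trans hε1) two_ne_zero
      _ ≤ ε := hε
  calc √(deriv (fun x' => stream η (x', z)) x ^ 2 + deriv (fun z' => stream η (x, z')) z ^ 2)
      ≤ |deriv (fun x' => stream η (x', z)) x| + |deriv (fun z' => stream η (x, z')) z| :=
        sqrt_sq_add_sq_le_abs_add_abs _ _
    _ ≤ (|deriv (deriv η) x| + 3 / 2 * deriv η x ^ 2 / η x) + 3 / 2 * |deriv η x| / η x :=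
        add_le_add (abs_deriv_stream_fst_le hη hη' hx hz) (abs_deriv_stream_snd_le hz)
    _ ≤ (|deriv (deriv η) x| + 3 / 2 * ε / η x) + 3 / 2 * ε / η x := by gcongr
    _ = |deriv (deriv η) x| + 3 * (ε / η x) := by ring
    _ ≤ 3 * (|deriv (deriv η) x| + ε / η x) := by linarith [abs_nonneg (deriv (deriv η) x)]

theorem stmt_9_general (hη : DifferentiableAt ℝ η x) (hη' : DifferentiableAt ℝ (deriv η) x)
    (hx : 0 < η x) (hz : z ∈ Icc 0 (η x)) :
    |deriv (fun z' => stream η (x, z')) z| ≤ 3 / 2 * |deriv η x| / η x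
    ∧ |deriv (fun x' => stream η (x', z)) x|
        ≤ |deriv (deriv η) x| + 3 / 2 * deriv η x ^ 2 / η x
    ∧ ∀ ε : ℝ, |deriv η x| ≤ ε → ε ≤ 1 →
        √(deriv (fun x' => stream η (x', z)) x ^ 2 + deriv (fun z' => stream η (x, z')) z ^ 2)
          ≤ 3 * (|deriv (deriv η) x| + ε / η x) :=
  ⟨abs_deriv_stream_snd_le hz, abs_deriv_stream_fst_le hη hη' hx hz,
    fun _ => norm_grad_stream_le hη hη' hx hz⟩

end Stream

/-- pointwise gradient estimate (3.5) of Lemma 3.3, with explicit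
constants. For a positive, C², 1-periodic `η` and the stream function
`ψ(x,z) = ∂ₓη(x)·χ(z/η(x))` one has, for `0 ≤ z ≤ η(x)`:
`|∂_zψ| ≤ (3/2)|∂ₓη|/η` and `|∂ₓψ| ≤ |∂ₓ²η| + (3/2)(∂ₓη)²/η`; in particular, if
`|∂ₓη| ≤ ε ≤ 1` everywhere then `|∇ψ| ≤ 3(|∂ₓ²η| + ε/η)`. -/
theorem stmt_9 (η : ℝ → ℝ) (hη : ContDiff ℝ 2 η) (hper : ∀ x, η (x + 1) = η x)
    (hpos : ∀ x, 0 < η x) :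
    (∀ x z : ℝ, z ∈ Icc 0 (η x) →
        |deriv (fun z' => stream η (x, z')) z| ≤ 3 / 2 * |deriv η x| / η x)
    ∧ (∀ x z : ℝ, z ∈ Icc 0 (η x) →
        |deriv (fun x' => stream η (x', z)) x|
          ≤ |deriv (deriv η) x| + 3 / 2 * (deriv η x) ^ 2 / η x)
    ∧ ∀ ε : ℝ, (∀ x, |deriv η x| ≤ ε) → ε ≤ 1 →
        ∀ x z : ℝ, z ∈ Icc 0 (η x) →
          Real.sqrt ((deriv (fun x' => stream η (x', z)) x) ^ 2
              + (deriv (fun z' => stream η (x, z')) z) ^ 2)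
            ≤ 3 * (|deriv (deriv η) x| + ε / η x) := by
  have h (x z : ℝ) (hz : z ∈ Icc 0 (η x)) := stmt_9_general
    (hη.differentiable two_ne_zero x) (hη.differentiable_deriv_two x) (hpos x) hz
  exact ⟨fun x z hz => (h x z hz).1, fun x z hz => (h x z hz).2.1,
    fun ε hε hε1 x z hz => (h x z hz).2.2 ε (hε x) hε1⟩

end
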